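/- arXiv:2207.12621 — 2 statements merged into one kernel-verified Lean document; each statement's English description precedes it below -/
import Mathlib

section
/- Suppose λ ∈ ℝ with λ ≠ 0, w ∈ V and u ∈ Q satisfy the mixed eigenvalue equations: ⟪w, τ⟫_V + ⟪D τ, u⟫_Q = 0 for all τ ∈ V, and ⟪D w, v⟫_Q = -λ ⟪u, v⟫_Q for all v ∈ Q. Then D w = -λ • u (equivalently u = -(1/λ) • D w), and (λ, w) satisfies the primal eigenvalue equation ⟪D w, D τ⟫_Q = λ ⟪w, τ⟫_V for all τ ∈ V. -/
section

variable {𝕜 V Q : Type*} [RCLike 𝕜]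
  [SeminormedAddCommGroup V] [InnerProductSpace 𝕜 V]
  [NormedAddCommGroup Q] [InnerProductSpace 𝕜 Q]

theorem eq_smul_of_forall_inner_eq_mul {c : 𝕜} {x y : Q}
    (h : ∀ v : Q, inner 𝕜 v x = c * inner 𝕜 v y) : x = c • y :=
  ext_inner_left 𝕜 fun v => (h v).trans (inner_smul_right v y c).symm

-- The test vectors stand in the conjugate-linear slot, so that `lam` appears without conjugation.
theorem mixed_to_primal_general {D : V → Q} {lam : 𝕜} {w : V} {u : Q}
    (hmixed1 : ∀ τ : V, inner 𝕜 τ w + inner 𝕜 (D τ) u = 0)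
    (hmixed2 : ∀ v : Q, inner 𝕜 v (D w) = -lam * inner 𝕜 v u) :
    D w = -lam • u ∧ ∀ τ : V, inner 𝕜 (D τ) (D w) = lam * inner 𝕜 τ w := by
  refine ⟨eq_smul_of_forall_inner_eq_mul hmixed2, fun τ => ?_⟩
  calc
    inner 𝕜 (D τ) (D w) = -lam * inner 𝕜 (D τ) u := hmixed2 (D τ)
    _ = lam * -inner 𝕜 (D τ) u := neg_mul_comm lam _
    _ = lam * inner 𝕜 τ w := by rw [eq_neg_of_add_eq_zero_left (hmixed1 τ)]

end

/-- If (λ, w, u) with λ ≠ 0 solves the mixed eigenvalue problem, then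
D w = -λ • u (equivalently u = -(1/λ) • D w) and (λ, w) solves the
primal eigenvalue problem. -/
theorem mixed_to_primal
    {V Q : Type*} [NormedAddCommGroup V] [InnerProductSpace ℝ V]
    [NormedAddCommGroup Q] [InnerProductSpace ℝ Q]
    (D : V →L[ℝ] Q) (lam : ℝ) (hlam : lam ≠ 0) (w : V) (u : Q)
    (hmixed1 : ∀ τ : V, @inner ℝ _ _ w τ + @inner ℝ _ _ (D τ) u = 0)
    (hmixed2 : ∀ v : Q, @inner ℝ _ _ (D w) v = -lam * @inner ℝ _ _ u v) :
    D w = -lam • u ∧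
    (∀ τ : V, @inner ℝ _ _ (D w) (D τ) = lam * @inner ℝ _ _ w τ) := by
  obtain ⟨hDw, hprimal⟩ := mixed_to_primal_general (D := D) (w := w)
    (fun τ => by rw [real_inner_comm, hmixed1])
    (fun v => by rw [real_inner_comm, hmixed2, real_inner_comm])
  exact ⟨hDw, fun τ => by rw [real_inner_comm, hprimal, real_inner_comm]⟩
end

section
/- Let V be a real normed vector space, Q a real inner product space, a : V → V → ℝ a bilinear form, and b : V → Q → ℝ a bilinear form. Assume: (boundedness) there is α* > 0 with |a(x,y)| ≤ α* ‖x‖ ‖y‖ for all x, y ∈ V; (coercivity) there is α_* > 0 with a(x,x) ≥ α_* ‖x‖² for all x ∈ V; (inf-sup) there is β > 0 such that for every v ∈ Q there exists τ ∈ V with τ ≠ 0 and β ‖v‖ ‖τ‖ ≤ b(τ, v). Suppose e ∈ V, δ ∈ Q and g ∈ Q satisfy a(e, τ) + b(τ, δ) = 0 for all τ ∈ V, and b(e, δ) = ⟪g, δ⟫_Q. Then β ‖δ‖ ≤ α* ‖e‖ and α_* β ‖e‖ ≤ α* ‖g‖. -/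
/-!
The multiplier `δ` is controlled by testing the first error equation with the element `τ` that the
inf-sup condition supplies for `δ`. Testing it with `e` instead gives the energy identity
`a e e = -b e δ`, so `αs * ‖e‖ ^ 2 ≤ ‖g‖ * ‖δ‖`; inserting the bound on `δ` leaves a common factor
`‖e‖` to cancel.
-/

theorem mul_norm_le_of_infSup {V Q : Type*} [NormedAddCommGroup V] [Norm Q]
    {b : V → Q → ℝ} {f : V → ℝ} {β C : ℝ} {δ : Q}
    (hinfsup : ∀ v : Q, ∃ τ : V, τ ≠ 0 ∧ β * ‖v‖ * ‖τ‖ ≤ b τ v)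
    (hf : ∀ τ : V, |f τ| ≤ C * ‖τ‖) (h : ∀ τ : V, f τ + b τ δ = 0) :
    β * ‖δ‖ ≤ C := by
  obtain ⟨τ, hτ, hbτ⟩ := hinfsup δ
  refine le_of_mul_le_mul_right ?_ (norm_pos_iff.mpr hτ)
  calc β * ‖δ‖ * ‖τ‖ ≤ b τ δ := hbτ
    _ = -f τ := eq_neg_of_add_eq_zero_right (h τ)
    _ ≤ |f τ| := neg_le_abs _
    _ ≤ C * ‖τ‖ := hf τ

theorem mul_norm_sq_le_of_coercive {V Q : Type*} [Norm V]
    [SeminormedAddCommGroup Q] [NormedSpace ℝ Q]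
    {a : V → V → ℝ} {α : ℝ} {e : V} {δ : Q} {g : StrongDual ℝ Q}
    (hcoer : ∀ x : V, α * ‖x‖ ^ 2 ≤ a x x) (h : a e e + g δ = 0) :
    α * ‖e‖ ^ 2 ≤ ‖g‖ * ‖δ‖ :=
  calc α * ‖e‖ ^ 2 ≤ a e e := hcoer e
    _ = -g δ := eq_neg_of_add_eq_zero_left h
    _ ≤ |g δ| := neg_le_abs _
    _ ≤ ‖g‖ * ‖δ‖ := g.le_opNorm δ

theorem mul_mul_le_of_mul_sq_le {R : Type*} [CommRing R] [LinearOrder R] [IsStrictOrderedRing R]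
    {α β γ C x y : R} (hβ : 0 ≤ β) (hγ : 0 ≤ γ) (hC : 0 ≤ C) (hx : 0 ≤ x)
    (hxy : α * x ^ 2 ≤ γ * y) (hyx : β * y ≤ C * x) :
    α * β * x ≤ C * γ := by
  obtain rfl | hx := hx.eq_or_lt
  · simpa only [mul_zero] using mul_nonneg hC hγ
  · refine le_of_mul_le_mul_right ?_ hx
    calc α * β * x * x = β * (α * x ^ 2) := by ring
      _ ≤ β * (γ * y) := by gcongr
      _ = γ * (β * y) := by ring
      _ ≤ γ * (C * x) := by gcongr
      _ = C * γ * x := by ring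

theorem abstract_stability_estimate_general {V Q : Type*} [NormedAddCommGroup V]
    [SeminormedAddCommGroup Q] [NormedSpace ℝ Q]
    {a : V → V → ℝ} {b : V → Q → ℝ} {αs αb β : ℝ} (hαb : 0 ≤ αb) (hβ : 0 ≤ β)
    (hbound : ∀ x y : V, |a x y| ≤ αb * ‖x‖ * ‖y‖)
    (hcoer : ∀ x : V, αs * ‖x‖ ^ 2 ≤ a x x)
    (hinfsup : ∀ v : Q, ∃ τ : V, τ ≠ 0 ∧ β * ‖v‖ * ‖τ‖ ≤ b τ v)
    {e : V} {δ : Q} {g : StrongDual ℝ Q}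
    (h1 : ∀ τ : V, a e τ + b τ δ = 0) (h2 : b e δ = g δ) :
    β * ‖δ‖ ≤ αb * ‖e‖ ∧ αs * β * ‖e‖ ≤ αb * ‖g‖ := by
  have hδ : β * ‖δ‖ ≤ αb * ‖e‖ := mul_norm_le_of_infSup hinfsup (hbound e) h1
  have henergy : αs * ‖e‖ ^ 2 ≤ ‖g‖ * ‖δ‖ := mul_norm_sq_le_of_coercive hcoer (h2 ▸ h1 e)
  exact ⟨hδ, mul_mul_le_of_mul_sq_le hβ (norm_nonneg g) hαb (norm_nonneg e) henergy hδ⟩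

/-- Abstract stability estimate underlying Lemma 3.7: if a is bounded and
coercive, b satisfies an inf-sup condition, and (e, δ) solves the error
equations with datum g, then β‖δ‖ ≤ α*‖e‖ and α_* β ‖e‖ ≤ α* ‖g‖. -/
theorem abstract_stability_estimate
    {V Q : Type*} [NormedAddCommGroup V] [NormedSpace ℝ V]
    [NormedAddCommGroup Q] [InnerProductSpace ℝ Q]
    (a : V →ₗ[ℝ] V →ₗ[ℝ] ℝ) (b : V →ₗ[ℝ] Q →ₗ[ℝ] ℝ)
    (αs αb β : ℝ) (hαb : 0 < αb) (hαs : 0 < αs) (hβ : 0 < β)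
    (hbound : ∀ x y : V, |a x y| ≤ αb * ‖x‖ * ‖y‖)
    (hcoer : ∀ x : V, αs * ‖x‖ ^ 2 ≤ a x x)
    (hinfsup : ∀ v : Q, ∃ τ : V, τ ≠ 0 ∧ β * ‖v‖ * ‖τ‖ ≤ b τ v)
    (e : V) (δ : Q) (g : Q)
    (h1 : ∀ τ : V, a e τ + b τ δ = 0)
    (h2 : b e δ = @inner ℝ _ _ g δ) :
    β * ‖δ‖ ≤ αb * ‖e‖ ∧ αs * β * ‖e‖ ≤ αb * ‖g‖ := by
  simpa only [innerSL_apply_norm] using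
    abstract_stability_estimate_general (g := innerSL ℝ g) hαb.le hβ.le hbound hcoer hinfsup h1 h2
end
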